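/- Fix integers n ≥ 1, k ≥ 1, 1 ≤ l ≤ n, and smooth coefficient functions A^{I_1…I_{l−λ}}_{i_1…i_λ} on ℝ^N = J^k(n,1) as before; suppose moreover that Ψ′ is any differential l-form on ℝ^N of the shape Ψ′ = Σ_{λ=0}^{l} Σ_{i_1<…<i_λ} Σ_{I_1<…<I_{l−λ}} A^{I_1…I_{l−λ}}_{i_1…i_λ} dx_{i_1}∧…∧dx_{i_λ}∧dp_{I_1}∧…∧dp_{I_{l−λ}} + Σ_s ω_s∧θ_s, where each ω_s is a contact 1-form on J^k(n,1) and each θ_s is a smooth (l−1)-form on ℝ^N (i.e., Ψ′ is congruent to the explicit sum modulo the algebraic ideal of the contact forms). Then for any smooth z : ℝ^n → ℝ, the pullback (j^k z)*Ψ′ vanishes identically if and only if z satisfies, for every 1 ≤ ν_1 < … < ν_l ≤ n and every x ∈ ℝ^n: Σ_{λ=0}^{l} Σ (over all splittings {ν_1,…,ν_l} = {i_1<…<i_λ} ⊔ {j_1<…<j_{l−λ}}) Σ_{I_1<…<I_{l−λ}} A^{I_1…I_{l−λ}}_{i_1…i_λ}(j^k z(x)) · Δ^{I_1…I_{l−λ}}_{j_1…j_{l−λ}}(ν_1,…,ν_l;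 z)(x) = 0. -/

import Mathlib

/-!
Both sides of the equivalence say that the pullback `(j^k z)^* Ψ'` vanishes at every point, once on
all tuples of vectors and once on the tuples `(e_{ν_1}, …, e_{ν_l})` of standard basis vectors with
`ν_1 < … < ν_l`. An alternating form is determined by its values on the latter
(`alternating_eq_zero_iff`), so it suffices to show that the value of the pullback on
`(e_{ν_1}, …, e_{ν_l})` is exactly the left-hand side of the equation indexed by `ν`.

The contact forms vanish on the image of the derivative of a jet section
(`contact0_fderiv_jetSec`, `contactP_fderiv_jetSec`); here Schwarz's theorem enters, since `∂_I` is
defined by a chosen ordering of the multiset `I`, and `∂_{Ii} z = ∂_i ∂_I z` requires independence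
of that ordering. Hence every term `ω_s ∧ θ_s` pulls back to zero (`wedge1_apply_eq_zero`).

For a monomial `dx_{i_1} ∧ … ∧ dx_{i_λ} ∧ dp_{I_1} ∧ … ∧ dp_{I_{l-λ}}`, the value is the determinant
of the matrix of the pulled-back `1`-forms on the vectors `e_{ν_b}`. If some `i` is not among the `ν`,
the line of `dx_i` is zero (`wedge_formList1_eq_zero`). Otherwise, permuting `(ν_1, …, ν_l)` into
`(i_1, …, i_λ, j_1, …, j_{l-λ})` contributes the factor `sgn σ` and makes the matrix block triangular
with blocks the identity and the transpose of `(∂_{I_c} ∂_{j_r} z)`, which gives `Δ`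
(`wedge_formList1`).
-/

noncomputable section
namespace GMAE

/-- first-order partial derivative in the direction `x_i` -/
noncomputable def pd {n : ℕ} (i : Fin n) (f : (Fin n → ℝ) → ℝ) : (Fin n → ℝ) → ℝ :=
  fun x => fderiv ℝ f x (Pi.single i 1)

/-- iterated partial derivative along a list of coordinate directions -/
noncomputable def pdList {n : ℕ} : List (Fin n) → ((Fin n → ℝ) → ℝ) → ((Fin n → ℝ) → ℝ)
  | [], f => f
  | i :: L, f => pdList L (pd i f)

/-- iterated partial derivative `∂_I` along a multiset of directions -/
noncomputable def pdM {n : ℕ} (I : Multiset (Fin n)) (f : (Fin n → ℝ) → ℝ) : (Fin n → ℝ) → ℝ :=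
  pdList I.toList f

/-- `Σ_k`: symmetric multi-indices of length `1,…,k`; the component `j` consists of
the multi-indices of length `k - j`. -/
abbrev SigIdx (n k : ℕ) := Σ j : Fin k, Sym (Fin n) (k - j.val)

/-- the inclusion of `S_k` (multi-indices of length exactly `k`) into `Σ_k` -/
def topIdx {n k : ℕ} (hk : 0 < k) (I : Sym (Fin n) k) : SigIdx n k := ⟨⟨0, hk⟩, I⟩

/-- the underlying multiset of a multi-index in `Σ_k` -/
def SigIdx.toMultiset {n k : ℕ} (p : SigIdx n k) : Multiset (Fin n) := ↑p.2

/-- index set for the coordinates `(x_i, z^α, p^α_I)` of the jet space `J^k(n,m)` -/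
abbrev JIdx (n m k : ℕ) := Fin n ⊕ Fin m ⊕ (Fin m × SigIdx n k)

/-- the `k`-jet space `J^k(n,m) = ℝ^N`, `N = n + m + m⬝|Σ_k|` -/
abbrev Jet (n m k : ℕ) := JIdx n m k → ℝ

/-- the coordinate `1`-form `dx_i` -/
def dxF {n m k : ℕ} (i : Fin n) : Jet n m k →ₗ[ℝ] ℝ := LinearMap.proj (Sum.inl i)
/-- the coordinate `1`-form `dz^α` -/
def dzF {n m k : ℕ} (α : Fin m) : Jet n m k →ₗ[ℝ] ℝ := LinearMap.proj (Sum.inr (Sum.inl α))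
/-- the coordinate `1`-form `dp^α_I` -/
def dpF {n m k : ℕ} (α : Fin m) (I : SigIdx n k) : Jet n m k →ₗ[ℝ] ℝ :=
  LinearMap.proj (Sum.inr (Sum.inr (α, I)))

/-- the `k`-jet section of `z = (z^1,…,z^m)` -/
noncomputable def jetSec {n m k : ℕ} (z : Fin m → (Fin n → ℝ) → ℝ) (x : Fin n → ℝ) :
    Jet n m k :=
  Sum.elim x (Sum.elim (fun α => z α x) fun p => pdM (SigIdx.toMultiset p.2) (z p.1) x)

/-- the singleton multi-index `(i)` as an element of `Σ_k` -/
def singIdx {n k : ℕ} (hk : 0 < k) (i : Fin n) : SigIdx n k :=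
  ⟨⟨k - 1, by omega⟩, Sym.cast (show 1 = k - (k-1) by omega) (Sym.replicate 1 i)⟩

/-- `Ii`: the multi-index `I ∈ Σ_{k-1} ⊆ Σ_k` with `i` added, an element of `Σ_k` -/
def consIdx {n k : ℕ} (p : SigIdx n k) (hp : 1 ≤ p.1.val) (i : Fin n) : SigIdx n k :=
  ⟨⟨p.1.val - 1, by omega⟩,
    Sym.cast (show (k - p.1.val) + 1 = k - (p.1.val - 1) by omega) (i ::ₛ p.2)⟩

/-- the contact `1`-form `ω^α_0 = dz^α - Σ_i p^α_i dx_i` at the point `u` -/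
noncomputable def contact0 {n m k : ℕ} (hk : 0 < k) (α : Fin m) (u : Jet n m k) :
    Jet n m k →ₗ[ℝ] ℝ :=
  dzF α - ∑ i, u (Sum.inr (Sum.inr (α, singIdx hk i))) • dxF i

/-- the contact `1`-form `ω^α_I = dp^α_I - Σ_i p^α_{Ii} dx_i`, for `I ∈ Σ_{k-1}`,
at the point `u` -/
noncomputable def contactP {n m k : ℕ} (α : Fin m) (p : SigIdx n k) (hp : 1 ≤ p.1.val)
    (u : Jet n m k) : Jet n m k →ₗ[ℝ] ℝ :=
  dpF α p - ∑ i, u (Sum.inr (Sum.inr (α, consIdx p hp i))) • dxF i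

/-- the wedge product `θ_1 ∧ ⋯ ∧ θ_l` of `1`-forms, `(w_1,…,w_l) ↦ det (θ_a (w_b))` -/
noncomputable def wedge {E : Type*} [AddCommGroup E] [Module ℝ E] {l : ℕ}
    (θ : Fin l → (E →ₗ[ℝ] ℝ)) : E [⋀^Fin l]→ₗ[ℝ] ℝ :=
  Matrix.detRowAlternating.compLinearMap (LinearMap.pi θ)

/-- pullback of a differential `l`-form along a map `ι` -/
noncomputable def pullback {E F : Type*} [NormedAddCommGroup E] [NormedSpace ℝ E]
    [NormedAddCommGroup F] [NormedSpace ℝ F] {l : ℕ}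
    (ι : E → F) (Ψ : F → (F [⋀^Fin l]→ₗ[ℝ] ℝ)) (x : E) : E [⋀^Fin l]→ₗ[ℝ] ℝ :=
  (Ψ (ι x)).compLinearMap (fderiv ℝ ι x).toLinearMap

end GMAE

namespace GMAE

variable {n k : ℕ} [LinearOrder (Sym (Fin n) k)]

/-- the ordered list of `1`-forms `dx_{i_1},…,dx_{i_λ},dp_{I_1},…,dp_{I_{l-λ}}` of a
monomial of `Ψ`, determined by the set `s` of the `i`'s and the set `T` of the `I`'s
(each listed in increasing order). -/
noncomputable def formList1 (hk : 0 < k) (s : Finset (Fin n))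
    (T : Finset (Sym (Fin n) k)) : List (Jet n 1 k →ₗ[ℝ] ℝ) :=
  (s.sort (· ≤ ·)).map dxF ++ (T.sort (· ≤ ·)).map fun I => dpF 0 (topIdx hk I)

/-- the `l`-form `Ψ = Σ A^{I_1…I_{l-λ}}_{i_1…i_λ} dx_{i_1}∧⋯∧dx_{i_λ}∧dp_{I_1}∧⋯∧dp_{I_{l-λ}}`
on `J^k(n,1)` with coefficients `A` -/
noncomputable def Psi1 (hk : 0 < k)
    (A : Finset (Fin n) → Finset (Sym (Fin n) k) → Jet n 1 k → ℝ) (l : ℕ)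
    (u : Jet n 1 k) : (Jet n 1 k) [⋀^Fin l]→ₗ[ℝ] ℝ :=
  ∑ s : Finset (Fin n), ∑ T : Finset (Sym (Fin n) k),
    if h : (formList1 hk s T).length = l then
      A s T u • wedge (fun a => (formList1 hk s T).get (Fin.cast h.symm a))
    else 0

/-- the tuple `(i_1,…,i_λ, j_1,…,j_{l-λ})` obtained from the splitting
`{ν_1,…,ν_l} = {i_1<…<i_λ} ⊔ {j_1<…<j_{l-λ}}` determined by the subset `s` (the `i`'s)
of the image of `ν`. -/
noncomputable def splitTuple {l : ℕ} (ν : Fin l → Fin n) (s : Finset (Fin n))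
    (a : Fin l) : Fin n :=
  if h : a.val < s.card then s.orderIsoOfFin rfl ⟨a.val, h⟩
  else if h2 : a.val - s.card < ((Finset.image ν Finset.univ) \ s).card then
    ((Finset.image ν Finset.univ) \ s).orderIsoOfFin rfl ⟨a.val - s.card, h2⟩
  else ν a

/-- `sgn(σ)`, where `σ` is the permutation rearranging `(ν_1,…,ν_l)` into
`(i_1,…,i_λ, j_1,…,j_{l-λ})`: the determinant of the permutation matrix of `σ`. -/
noncomputable def splitSign {l : ℕ} (ν : Fin l → Fin n) (s : Finset (Fin n)) : ℝ :=
  Matrix.det (Matrix.of fun a b => if ν b = splitTuple ν s a then (1 : ℝ) else 0)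

/-- `Δ^{I_1…I_{l-λ}}_{j_1…j_{l-λ}}(ν_1,…,ν_l; z) = sgn(σ)·det(∂_{I_c}∂_{x_{j_r}} z)`,
where the `j`'s are the complement of `s` in the image of `ν` (in increasing order)
and the `I`'s are the elements of `T` (in increasing order). -/
noncomputable def Delta1 {l : ℕ} (z : (Fin n → ℝ) → ℝ) (ν : Fin l → Fin n)
    (s : Finset (Fin n)) (T : Finset (Sym (Fin n) k)) (x : Fin n → ℝ) : ℝ :=
  splitSign ν s *
    Matrix.det (Matrix.of fun (r c : Fin (T.sort (· ≤ ·)).length) =>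
      if h : r.val < ((Finset.image ν Finset.univ) \ s).card then
        pdM (((T.sort (· ≤ ·)).get c : Sym (Fin n) k) : Multiset (Fin n))
          (pd (((Finset.image ν Finset.univ) \ s).orderIsoOfFin rfl ⟨r.val, h⟩) z) x
      else 0)

/-- the left-hand side of the generalized Monge–Ampère equation indexed by
`ν = (ν_1 < … < ν_l)`, evaluated at `x` -/
noncomputable def gmaeLHS1
    (A : Finset (Fin n) → Finset (Sym (Fin n) k) → Jet n 1 k → ℝ) {l : ℕ}
    (z : (Fin n → ℝ) → ℝ) (ν : Fin l → Fin n) (x : Fin n → ℝ) : ℝ :=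
  ∑ s ∈ (Finset.image ν Finset.univ).powerset, ∑ T : Finset (Sym (Fin n) k),
    if s.card + T.card = l then
      A s T (jetSec (fun _ : Fin 1 => z) x) * Delta1 z ν s T x
    else 0

end GMAE

namespace GMAE

/-- the wedge product of a `1`-form with an `l`-form -/
noncomputable def wedge1 {E : Type*} [AddCommGroup E] [Module ℝ E] {l : ℕ}
    (ω : E →ₗ[ℝ] ℝ) (θ : E [⋀^Fin l]→ₗ[ℝ] ℝ) : E [⋀^Fin (1 + l)]→ₗ[ℝ] ℝ :=
  ((TensorProduct.lid ℝ ℝ).toLinearMap.compAlternatingMap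
    (AlternatingMap.domCoprod (AlternatingMap.ofSubsingleton ℝ E ℝ 0 ω) θ)).domDomCongr
    finSumFinEquiv

/-! ### Commutation of partial derivatives -/

lemma two_le_top : (2 : WithTop ℕ∞) ≤ ((⊤ : ℕ∞) : WithTop ℕ∞) := by
  have : (2 : ℕ∞) ≤ ⊤ := le_top
  exact WithTop.coe_le_coe.2 this

lemma contDiff_pd {n : ℕ} (i : Fin n) {f : (Fin n → ℝ) → ℝ} (hf : ContDiff ℝ (⊤ : ℕ∞) f) :
    ContDiff ℝ (⊤ : ℕ∞) (pd i f) :=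
  (hf.fderiv_right (m := ((⊤ : ℕ∞) : WithTop ℕ∞)) (by exact_mod_cast le_top)).clm_apply contDiff_const

/-- Schwarz's theorem. -/
lemma pd_comm {n : ℕ} (i j : Fin n) {f : (Fin n → ℝ) → ℝ} (hf : ContDiff ℝ (⊤ : ℕ∞) f) :
    pd i (pd j f) = pd j (pd i f) := by
  funext x
  have hd : DifferentiableAt ℝ (fderiv ℝ f) x :=
    ((hf.fderiv_right (m := 1) (by rw [one_add_one_eq_two]; exact two_le_top)).differentiable (by simp)) x
  have key : ∀ a b : Fin n, pd a (pd b f) x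
      = fderiv ℝ (fderiv ℝ f) x (Pi.single a 1) (Pi.single b 1) := by
    intro a b
    unfold pd
    rw [fderiv_clm_apply hd (differentiableAt_const _)]
    simp
  have hsymm : IsSymmSndFDerivAt ℝ f x :=
    (hf.contDiffAt).isSymmSndFDerivAt (by simpa using two_le_top)
  rw [key, key, hsymm.eq]

lemma contDiff_pdList {n : ℕ} (L : List (Fin n)) {f : (Fin n → ℝ) → ℝ}
    (hf : ContDiff ℝ (⊤ : ℕ∞) f) : ContDiff ℝ (⊤ : ℕ∞) (pdList L f) := by
  induction L generalizing f with
  | nil => exact hf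
  | cons i L ih => exact ih (contDiff_pd i hf)

lemma pdList_pd {n : ℕ} (L : List (Fin n)) (i : Fin n) {f : (Fin n → ℝ) → ℝ}
    (hf : ContDiff ℝ (⊤ : ℕ∞) f) : pdList L (pd i f) = pd i (pdList L f) := by
  induction L generalizing f with
  | nil => rfl
  | cons j L ih =>
    simp only [pdList]
    rw [pd_comm j i hf, ih (contDiff_pd j hf)]

/-- Iterated partial derivatives of a smooth function do not depend on the order of the directions,
so the choice made by `Multiset.toList` in `pdM` is immaterial. -/
lemma pdList_perm {n : ℕ} {L L' : List (Fin n)} (h : L.Perm L') {f : (Fin n → ℝ) → ℝ}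
    (hf : ContDiff ℝ (⊤ : ℕ∞) f) : pdList L f = pdList L' f := by
  induction h generalizing f with
  | nil => rfl
  | cons i _ ih => exact ih (contDiff_pd i hf)
  | swap i j L => simp only [pdList]; rw [pd_comm i j hf]
  | trans _ _ ih1 ih2 => rw [ih1 hf, ih2 hf]

lemma contDiff_pdM {n : ℕ} (I : Multiset (Fin n)) {f : (Fin n → ℝ) → ℝ}
    (hf : ContDiff ℝ (⊤ : ℕ∞) f) : ContDiff ℝ (⊤ : ℕ∞) (pdM I f) :=
  contDiff_pdList _ hf

lemma pd_pdM {n : ℕ} (I : Multiset (Fin n)) (i : Fin n) {f : (Fin n → ℝ) → ℝ}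
    (hf : ContDiff ℝ (⊤ : ℕ∞) f) : pd i (pdM I f) = pdM I (pd i f) :=
  (pdList_pd _ i hf).symm

lemma pdM_cons {n : ℕ} (I : Multiset (Fin n)) (i : Fin n) {f : (Fin n → ℝ) → ℝ}
    (hf : ContDiff ℝ (⊤ : ℕ∞) f) : pdM (i ::ₘ I) f = pd i (pdM I f) := by
  have hp : ((i ::ₘ I).toList).Perm (i :: I.toList) := by
    rw [← Multiset.coe_eq_coe, ← Multiset.cons_coe]
    simp
  rw [pd_pdM I i hf]
  exact pdList_perm hp hf

lemma pdM_singleton {n : ℕ} (i : Fin n) (f : (Fin n → ℝ) → ℝ) : pdM {i} f = pd i f := by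
  simp [pdM, pdList]

lemma fderiv_eq_sum_pd {n : ℕ} (f : (Fin n → ℝ) → ℝ) (x v : Fin n → ℝ) :
    fderiv ℝ f x v = ∑ i, pd i f x * v i := by
  conv_lhs => rw [pi_eq_sum_univ' v]
  simp [map_sum, pd, mul_comm]

/-! ### The derivative of a jet section, and the contact forms on its image -/

lemma toMultiset_singIdx {n k : ℕ} (hk : 0 < k) (i : Fin n) :
    SigIdx.toMultiset (singIdx hk i) = {i} := by
  rfl

lemma toMultiset_consIdx {n k : ℕ} (p : SigIdx n k) (hp : 1 ≤ p.1.val) (i : Fin n) :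
    SigIdx.toMultiset (consIdx p hp i) = i ::ₘ SigIdx.toMultiset p := by
  rfl

lemma fderiv_jetSec {n k : ℕ} {z : (Fin n → ℝ) → ℝ} (hz : ContDiff ℝ (⊤ : ℕ∞) z)
    (x v : Fin n → ℝ) (c : JIdx n 1 k) :
    fderiv ℝ (jetSec (k := k) fun _ : Fin 1 => z) x v c
      = fderiv ℝ (fun y => jetSec (k := k) (fun _ : Fin 1 => z) y c) x v := by
  have h : ∀ c, DifferentiableAt ℝ (fun y => jetSec (k := k) (fun _ : Fin 1 => z) y c) x := by
    rintro (i | a | ⟨a, p⟩)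
    · exact differentiableAt_apply i x
    · exact hz.differentiable (by simp) x
    · exact (contDiff_pdM _ hz).differentiable (by simp) x
  rw [fderiv_pi h]
  rfl

lemma dxF_fderiv_jetSec {n k : ℕ} {z : (Fin n → ℝ) → ℝ} (hz : ContDiff ℝ (⊤ : ℕ∞) z)
    (x v : Fin n → ℝ) (i : Fin n) :
    dxF i (fderiv ℝ (jetSec (k := k) fun _ : Fin 1 => z) x v) = v i := by
  refine (fderiv_jetSec hz x v _).trans ?_
  change fderiv ℝ (fun y : Fin n → ℝ => y i) x v = v i
  rw [(hasFDerivAt_apply i x).fderiv]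
  rfl

lemma dzF_fderiv_jetSec {n k : ℕ} {z : (Fin n → ℝ) → ℝ} (hz : ContDiff ℝ (⊤ : ℕ∞) z)
    (x v : Fin n → ℝ) (a : Fin 1) :
    dzF a (fderiv ℝ (jetSec (k := k) fun _ : Fin 1 => z) x v) = fderiv ℝ z x v :=
  fderiv_jetSec hz x v _

lemma dpF_fderiv_jetSec {n k : ℕ} {z : (Fin n → ℝ) → ℝ} (hz : ContDiff ℝ (⊤ : ℕ∞) z)
    (x v : Fin n → ℝ) (a : Fin 1) (p : SigIdx n k) :
    dpF a p (fderiv ℝ (jetSec (k := k) fun _ : Fin 1 => z) x v)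
      = fderiv ℝ (pdM p.toMultiset z) x v :=
  fderiv_jetSec hz x v _

lemma contact0_fderiv_jetSec {n k : ℕ} (hk : 0 < k) {z : (Fin n → ℝ) → ℝ}
    (hz : ContDiff ℝ (⊤ : ℕ∞) z) (x v : Fin n → ℝ) :
    contact0 hk 0 (jetSec (fun _ : Fin 1 => z) x)
      (fderiv ℝ (jetSec (k := k) fun _ : Fin 1 => z) x v) = 0 := by
  simp only [contact0, LinearMap.sub_apply, LinearMap.sum_apply, LinearMap.smul_apply,
    dzF_fderiv_jetSec hz, dxF_fderiv_jetSec hz, smul_eq_mul]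
  simp [jetSec, toMultiset_singIdx, pdM_singleton, fderiv_eq_sum_pd]

lemma contactP_fderiv_jetSec {n k : ℕ} (p : SigIdx n k) (hp : 1 ≤ p.1.val)
    {z : (Fin n → ℝ) → ℝ} (hz : ContDiff ℝ (⊤ : ℕ∞) z) (x v : Fin n → ℝ) :
    contactP 0 p hp (jetSec (fun _ : Fin 1 => z) x)
      (fderiv ℝ (jetSec (k := k) fun _ : Fin 1 => z) x v) = 0 := by
  simp only [contactP, LinearMap.sub_apply, LinearMap.sum_apply, LinearMap.smul_apply,
    dpF_fderiv_jetSec hz, dxF_fderiv_jetSec hz, smul_eq_mul]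
  simp [jetSec, toMultiset_consIdx, pdM_cons _ _ hz, fderiv_eq_sum_pd]

/-! ### Exterior algebra -/

/-- Each summand of the shuffle expansion of `(ω ∧ θ) w` contains a factor `ω (w b)`. -/
lemma wedge1_apply_eq_zero {E : Type*} [AddCommGroup E] [Module ℝ E] {l : ℕ}
    (ω : E →ₗ[ℝ] ℝ) (θ : E [⋀^Fin l]→ₗ[ℝ] ℝ) (w : Fin (1 + l) → E) (hw : ∀ b, ω (w b) = 0) :
    wedge1 ω θ w = 0 := by
  simp only [wedge1, AlternatingMap.domDomCongr_apply, LinearMap.compAlternatingMap_apply,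
    AlternatingMap.domCoprod_apply, _root_.sum_apply]
  rw [map_sum]
  refine Finset.sum_eq_zero fun σ _ => ?_
  induction σ using Quotient.inductionOn' with
  | h σ =>
    rw [AlternatingMap.domCoprod.summand_mk'']
    simp [hw]

lemma alternating_sum_apply {E ι α : Type*} [AddCommGroup E] [Module ℝ E] (s : Finset α)
    (φ : α → E [⋀^ι]→ₗ[ℝ] ℝ) (v : ι → E) : (∑ a ∈ s, φ a) v = ∑ a ∈ s, φ a v := by
  classical
  induction s using Finset.induction_on with
  | empty => simp
  | insert a s ha ih => simp [Finset.sum_insert ha, ih]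

/-- An alternating form on `ℝⁿ` is zero iff it vanishes on all strictly increasing tuples of standard
basis vectors: repeated vectors give zero, and sorting an injective tuple only changes the sign. -/
lemma alternating_eq_zero_iff {n l : ℕ} (φ : (Fin n → ℝ) [⋀^Fin l]→ₗ[ℝ] ℝ) :
    (∀ v, φ v = 0) ↔ ∀ ν : Fin l → Fin n, StrictMono ν → φ (fun b => Pi.single (ν b) 1) = 0 := by
  refine ⟨fun h ν _ => h _, fun h => ?_⟩
  suffices φ = 0 by simp [this]
  refine Module.Basis.ext_alternating (Pi.basisFun ℝ (Fin n)) fun ν hν => ?_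
  have hs : StrictMono (ν ∘ Tuple.sort ν) :=
    (Tuple.monotone_sort ν).strictMono_of_injective (hν.comp (Tuple.sort ν).injective)
  have h0 := h _ hs
  have h1 := φ.map_perm (fun b => Pi.single (ν b) 1) (Tuple.sort ν)
  have h2 : φ ((fun b => Pi.single (ν b) 1) ∘ Tuple.sort ν) = 0 := h0
  rw [h2] at h1
  simpa [Pi.basisFun_apply] using (smul_eq_zero_iff_eq _).1 h1.symm

/-! ### Pullback of the monomials of `Ψ` -/

section
variable {n k : ℕ} [LinearOrder (Sym (Fin n) k)]

lemma length_formList1 (hk : 0 < k) (s : Finset (Fin n)) (T : Finset (Sym (Fin n) k)) :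
    (formList1 hk s T).length = s.card + T.card := by
  simp [formList1]

/-- The pullback of the monomial indexed by `(s, T)`, evaluated on `(e_{ν_1}, …, e_{ν_l})`, when all
the `dx`-indices occur among the entries of `ν`. -/
lemma wedge_formList1 (hk : 0 < k) {l : ℕ} {z : (Fin n → ℝ) → ℝ}
    (hz : ContDiff ℝ (⊤ : ℕ∞) z) (x : Fin n → ℝ) (s : Finset (Fin n))
    (T : Finset (Sym (Fin n) k)) (h : (formList1 hk s T).length = l)
    (ν : Fin l → Fin n) (hν : StrictMono ν) (hs : s ⊆ Finset.image ν Finset.univ) :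
    wedge (fun a => (formList1 hk s T).get (Fin.cast h.symm a))
      (fun b => fderiv ℝ (jetSec (k := k) fun _ : Fin 1 => z) x (Pi.single (ν b) 1))
      = Delta1 z ν s T x := by
  classical
  have hl : s.card + (T.sort (· ≤ ·)).length = l := by
    rw [← h, length_formList1, Finset.length_sort]
  set J := Finset.image ν Finset.univ \ s with hJ
  have hJc : J.card = (T.sort (· ≤ ·)).length := by
    rw [hJ, Finset.card_sdiff_of_subset hs, Finset.card_image_of_injective _ hν.injective]
    simp only [Finset.card_univ, Fintype.card_fin]
    omega
  have hlt : ∀ c : Fin (T.sort (· ≤ ·)).length, c.val < J.card := fun c => c.isLt.trans_eq hJc.symm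
  -- positions in the monomial: the `dx` factors on the left, the `dp` factors on the right
  let e : Fin s.card ⊕ Fin (T.sort (· ≤ ·)).length ≃ Fin l :=
    finSumFinEquiv.trans (finCongr hl)
  -- the value of the `a`-th factor, pulled back, on `e_j`
  let g : Fin l → Fin n → ℝ := fun a j =>
    (formList1 hk s T).get (Fin.cast h.symm a)
      (fderiv ℝ (jetSec (k := k) fun _ : Fin 1 => z) x (Pi.single j 1))
  have gl : ∀ a j, g (e (Sum.inl a)) j = if j = s.orderEmbOfFin rfl a then 1 else 0 := by
    intro a j
    have : (formList1 hk s T).get (Fin.cast h.symm (e (Sum.inl a)))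
        = dxF (s.orderEmbOfFin rfl a) := by
      have hv : (Fin.cast h.symm (e (Sum.inl a))).val = a.val := by simp [e]
      simp only [List.get_eq_getElem, hv, Finset.orderEmbOfFin_apply]
      simp only [formList1]
      rw [List.getElem_append_left (by simp)]
      simp
    simp only [g, this, dxF_fderiv_jetSec hz, Pi.single_apply]
    simp [eq_comm]
  have gr : ∀ c j, g (e (Sum.inr c)) j
      = pdM (((T.sort (· ≤ ·)).get c : Sym (Fin n) k) : Multiset (Fin n)) (pd j z) x := by
    intro c j
    have : (formList1 hk s T).get (Fin.cast h.symm (e (Sum.inr c)))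
        = dpF 0 (topIdx hk ((T.sort (· ≤ ·)).get c)) := by
      have hv : (Fin.cast h.symm (e (Sum.inr c))).val = s.card + c.val := by simp [e]
      simp only [List.get_eq_getElem, hv]
      simp only [formList1]
      rw [List.getElem_append_right (by simp)]
      simp
    simp only [g, this, dpF_fderiv_jetSec hz]
    rw [← pd_pdM _ _ hz]
    rfl
  have τl : ∀ a, splitTuple ν s (e (Sum.inl a)) = s.orderEmbOfFin rfl a := by
    intro a
    simp [splitTuple, e]
  have τr : ∀ c, splitTuple ν s (e (Sum.inr c))
      = J.orderIsoOfFin rfl ⟨c.val, hlt c⟩ := by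
    intro c
    have := hlt c
    simp [splitTuple, e, ← hJ, this]
  -- `splitTuple ν s` hits every `ν b`; as both tuples have length `l`, it is a rearrangement of `ν`
  have hsurj : ∀ b, ∃ c, splitTuple ν s c = ν b := by
    intro b
    by_cases hb : ν b ∈ s
    · obtain ⟨a, ha⟩ := (s.orderIsoOfFin rfl).surjective ⟨ν b, hb⟩
      exact ⟨e (Sum.inl a), by rw [τl, ← Finset.coe_orderIsoOfFin_apply, ha]⟩
    · have hb' : ν b ∈ J := by simp [hJ, hb]
      obtain ⟨a, ha⟩ := (J.orderIsoOfFin rfl).surjective ⟨ν b, hb'⟩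
      refine ⟨e (Sum.inr ⟨a, a.isLt.trans_eq hJc⟩), ?_⟩
      rw [τr]
      exact congrArg Subtype.val ha
  choose κ hκ using hsurj
  have hκi : Function.Injective κ := fun b b' hbb => hν.injective (by rw [← hκ, ← hκ, hbb])
  have hτ : Function.Injective (splitTuple ν s) := by
    intro c c' hcc
    obtain ⟨b, rfl⟩ := (Finite.injective_iff_surjective.1 hκi) c
    obtain ⟨b', rfl⟩ := (Finite.injective_iff_surjective.1 hκi) c'
    rw [hκ, hκ] at hcc
    rw [hν.injective hcc]
  have h1 : wedge (fun a => (formList1 hk s T).get (Fin.cast h.symm a))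
      (fun b => fderiv ℝ (jetSec (k := k) fun _ : Fin 1 => z) x (Pi.single (ν b) 1))
      = Matrix.det (Matrix.of fun a b => g a (ν b)) := by
    rw [← Matrix.det_transpose]
    rfl
  -- undoing the rearrangement of the columns is multiplication by the matrix defining `splitSign`
  have h2 : (Matrix.of fun a b => g a (ν b)) = (Matrix.of fun a c => g a (splitTuple ν s c)) *
      (Matrix.of fun a b => if ν b = splitTuple ν s a then (1 : ℝ) else 0) := by
    ext a b
    simp only [Matrix.mul_apply, Matrix.of_apply]
    rw [Finset.sum_eq_single (κ b)]
    · simp [hκ]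
    · intro c _ hc
      rw [if_neg, mul_zero]
      rw [← hκ b]
      exact fun hh => hc (hτ hh.symm)
    · simp
  -- the upper right block vanishes because no `j` is an `i`
  have h3 : (Matrix.of fun a c => g a (splitTuple ν s c)).submatrix e e = Matrix.fromBlocks 1 0
      (Matrix.of fun c a => g (e (Sum.inr c)) (splitTuple ν s (e (Sum.inl a))))
      (Matrix.of fun c r => g (e (Sum.inr c)) (splitTuple ν s (e (Sum.inr r)))) := by
    ext (a | c) (b | r)
    · simp [gl, τl, Matrix.one_apply, eq_comm]
    · have hmem := ((J.orderIsoOfFin rfl) ⟨r.val, hlt r⟩).2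
      have hne : splitTuple ν s (e (Sum.inr r)) ≠ s.orderEmbOfFin rfl a := by
        rw [τr]
        intro hh
        rw [hh] at hmem
        exact (Finset.mem_sdiff.1 hmem).2 (Finset.orderEmbOfFin_mem s rfl a)
      simp [gl, hne]
    · rfl
    · rfl
  rw [h1, h2, Matrix.det_mul, ← Matrix.det_submatrix_equiv_self e (Matrix.of fun a c => g a _), h3,
    Matrix.det_fromBlocks_zero₁₂, Matrix.det_one, one_mul, mul_comm, Delta1, splitSign]
  congr 1
  rw [← Matrix.det_transpose]
  congr 1
  ext r c
  simp only [Matrix.transpose_apply, Matrix.of_apply, gr, τr]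
  rw [dif_pos (hlt r)]

lemma wedge_formList1_eq_zero (hk : 0 < k) {l : ℕ} {z : (Fin n → ℝ) → ℝ}
    (hz : ContDiff ℝ (⊤ : ℕ∞) z) (x : Fin n → ℝ) (s : Finset (Fin n))
    (T : Finset (Sym (Fin n) k)) (h : (formList1 hk s T).length = l)
    (ν : Fin l → Fin n) (hs : ¬ s ⊆ Finset.image ν Finset.univ) :
    wedge (fun a => (formList1 hk s T).get (Fin.cast h.symm a))
      (fun b => fderiv ℝ (jetSec (k := k) fun _ : Fin 1 => z) x (Pi.single (ν b) 1)) = 0 := by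
  obtain ⟨i, his, hi⟩ := Finset.not_subset.1 hs
  have hmem : (dxF i : Jet n 1 k →ₗ[ℝ] ℝ) ∈ formList1 hk s T := by
    simp only [formList1, List.mem_append, List.mem_map]
    exact Or.inl ⟨i, by simpa using his, rfl⟩
  obtain ⟨a, ha⟩ := List.get_of_mem hmem
  refine Matrix.det_eq_zero_of_column_eq_zero (Fin.cast h a) fun b => ?_
  have hb : i ≠ ν b := fun hh => hi (by simp [hh])
  change (formList1 hk s T).get a (fderiv ℝ _ x _) = 0
  rw [ha, dxF_fderiv_jetSec hz, Pi.single_eq_of_ne hb]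

/-- The left-hand side of the equation indexed by `ν` is the value of the pullback of `Ψ` on
`(e_{ν_1}, …, e_{ν_l})`. -/
lemma Psi1_jetSec (hk : 0 < k) (A : Finset (Fin n) → Finset (Sym (Fin n) k) → Jet n 1 k → ℝ)
    {l : ℕ} {z : (Fin n → ℝ) → ℝ} (hz : ContDiff ℝ (⊤ : ℕ∞) z) (x : Fin n → ℝ)
    (ν : Fin l → Fin n) (hν : StrictMono ν) :
    Psi1 hk A l (jetSec (fun _ : Fin 1 => z) x)
      (fun b => fderiv ℝ (jetSec (k := k) fun _ : Fin 1 => z) x (Pi.single (ν b) 1))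
      = gmaeLHS1 A z ν x := by
  simp only [Psi1, gmaeLHS1, alternating_sum_apply]
  symm
  refine Finset.sum_subset_zero_on_sdiff (Finset.subset_univ _) ?_ ?_
  · intro s hs
    refine Finset.sum_eq_zero fun T _ => ?_
    split_ifs with h
    · rw [AlternatingMap.smul_apply, wedge_formList1_eq_zero hk hz x s T h ν (by simpa using hs),
        smul_zero]
    · rfl
  · intro s hs
    refine Finset.sum_congr rfl fun T _ => ?_
    by_cases h : s.card + T.card = l
    · have h' := (length_formList1 hk s T).trans h
      rw [if_pos h, dif_pos h', AlternatingMap.smul_apply,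
        wedge_formList1 hk hz x s T h' ν hν (Finset.mem_powerset.1 hs), smul_eq_mul]
    · rw [if_neg h, dif_neg (by rwa [length_formList1])]
      rfl

end

/-- If `Ψ'` is congruent, modulo the algebraic ideal generated by the
contact forms (`Ψ' = Σ A dx∧…∧dp's + Σ_s ω_s ∧ θ_s` with `ω_s` contact `1`-forms and `θ_s`
smooth `(l-1)`-forms), to `Ψ = Σ A^{I_1…I_{l-λ}}_{i_1…i_λ} dx's∧dp's`, then the pullback of
`Ψ'` along the `k`-jet section of `z` vanishes identically iff `z` solves the corresponding
generalized Monge–Ampère equation. -/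
theorem statement14 (n k l : ℕ) (hn : 1 ≤ n) (hk : 1 ≤ k) (hl1 : 1 ≤ l) (hln : l ≤ n)
    [LinearOrder (Sym (Fin n) k)]
    (A : Finset (Fin n) → Finset (Sym (Fin n) k) → Jet n 1 k → ℝ)
    (hA : ∀ s T, ContDiff ℝ (⊤ : ℕ∞) (A s T))
    (S : ℕ) (ω : Fin S → Jet n 1 k → (Jet n 1 k →ₗ[ℝ] ℝ))
    (hω : ∀ s : Fin S, (ω s = contact0 hk 0) ∨
      ∃ (p : SigIdx n k) (hp : 1 ≤ p.1.val), ω s = contactP 0 p hp)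
    (θ : Fin S → Jet n 1 k → ((Jet n 1 k) [⋀^Fin (l - 1)]→ₗ[ℝ] ℝ))
    (hθ : ∀ (s : Fin S) (v : Fin (l - 1) → Jet n 1 k), ContDiff ℝ (⊤ : ℕ∞) fun u => θ s u v)
    (Ψ' : Jet n 1 k → ((Jet n 1 k) [⋀^Fin l]→ₗ[ℝ] ℝ))
    (hΨ' : ∀ u, Ψ' u = Psi1 hk A l u +
      ∑ s : Fin S,
        (wedge1 (ω s u) (θ s u)).domDomCongr (finCongr (by omega : 1 + (l - 1) = l)))
    (z : (Fin n → ℝ) → ℝ) (hz : ContDiff ℝ (⊤ : ℕ∞) z) :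
    (∀ (x : Fin n → ℝ) (v : Fin l → (Fin n → ℝ)),
        pullback (jetSec (k := k) fun _ : Fin 1 => z) Ψ' x v = 0)
    ↔ (∀ ν : Fin l → Fin n, StrictMono ν → ∀ x : Fin n → ℝ,
        gmaeLHS1 A z ν x = 0) := by
  have key : ∀ (x : Fin n → ℝ) (ν : Fin l → Fin n), StrictMono ν →
      pullback (jetSec (k := k) fun _ : Fin 1 => z) Ψ' x (fun b => Pi.single (ν b) 1)
        = gmaeLHS1 A z ν x := by
    intro x ν hν
    have hcontact : ∀ (s : Fin S) (v : Fin n → ℝ), ω s (jetSec (fun _ : Fin 1 => z) x)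
        (fderiv ℝ (jetSec (k := k) fun _ : Fin 1 => z) x v) = 0 := by
      intro s v
      rcases hω s with h | ⟨p, hp, h⟩
      · rw [h]; exact contact0_fderiv_jetSec hk hz x v
      · rw [h]; exact contactP_fderiv_jetSec p hp hz x v
    rw [← Psi1_jetSec hk A hz x ν hν]
    simp only [pullback, AlternatingMap.compLinearMap_apply, hΨ', AlternatingMap.add_apply,
      alternating_sum_apply, AlternatingMap.domDomCongr_apply]
    rw [Finset.sum_eq_zero, add_zero]
    · rfl
    · intro s _
      exact wedge1_apply_eq_zero _ _ _ fun b => hcontact s _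
  constructor
  · intro h ν hν x
    rw [← key x ν hν]
    exact h x _
  · intro h x
    refine (alternating_eq_zero_iff _).2 fun ν hν => ?_
    rw [key x ν hν]
    exact h ν hν x

end GMAE
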